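/- Let d ≥ 1, t with 0 ≤ t < d, and q ≥ 1. Let C ⊆ Q_q^d be a code in which any two distinct codewords have Hamming distance at least t+1. Then there exist an integer q' ≥ q and an MDS(t,d,q') code M ⊆ Q_{q'}^d such that the image of C under the coordinatewise inclusion Q_q ⊆ Q_{q'} is contained in M. -/

import Mathlib

/-- `C ⊆ Q_q^d` is an MDS code with code distance `t+1`: every `t`-dimensional
axis-aligned plane (equivalently, every assignment of values to a set of `d - t`
coordinates) meets `C` in exactly one point. -/
def IsMDS {α : Type*} (d t : ℕ) (C : Set (Fin d → α)) : Prop :=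
  ∀ S : Finset (Fin d), S.card = d - t →
    ∀ g : Fin d → α, ∃! x : Fin d → α, x ∈ C ∧ ∀ i ∈ S, x i = g i

lemma switching {K U W X : Type*} [Field K] [AddCommGroup U] [Module K U] [AddCommGroup W]
    [Module K W] (d t : ℕ) (v : Fin d → U)
    (hext : ∀ S : Finset (Fin d), S.card = d - t → ∀ g : Fin d → W,
      ∃ f : U →ₗ[K] W, ∀ i ∈ S, f (v i) = g i)
    (hspan : ∀ S : Finset (Fin d), S.card = d - t → ∀ j, v j ∈ Submodule.span K (v '' S))
    (V : X → Submodule K W) (b δ : X → Fin d → W) (hδ : ∀ x i, δ x i ∈ V x)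
    (hdisj : ∀ x y (z : Fin d → W), (∀ i, z i - b x i ∈ V x) → (∀ i, z i - b y i ∈ V y) → x = y)
    (hb : ∀ x, ∃ f : U →ₗ[K] W, ∀ i, b x i - δ x i = f (v i)) :
    ∃ M : Set (Fin d → W), IsMDS d t M ∧ ∀ x, b x ∈ M := by
  have hsub : ∀ S : Finset (Fin d), S.card = d - t → ∀ (f : U →ₗ[K] W) (P : Submodule K W),
      (∀ i ∈ S, f (v i) ∈ P) → ∀ j, f (v j) ∈ P := by
    intro S hS f P h j
    have : Submodule.span K (v '' S) ≤ P.comap f := by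
      rw [Submodule.span_le]
      rintro _ ⟨i, hi, rfl⟩
      exact h i hi
    exact this (hspan S hS j)
  refine ⟨{y | (∃ x, (∀ i, y i - b x i ∈ V x) ∧ ∃ f : U →ₗ[K] W, ∀ i, y i - δ x i = f (v i)) ∨
    ((∀ x, ¬ ∀ i, y i - b x i ∈ V x) ∧ ∃ f : U →ₗ[K] W, ∀ i, y i = f (v i))}, ?_, ?_⟩
  swap
  · intro x
    exact Or.inl ⟨x, by simp, hb x⟩
  intro S hS g
  obtain ⟨c, hc⟩ := hext S hS g
  -- if `y` was switched in the box of `x`, then `c` lies in that box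
  have key : ∀ x (y : Fin d → W) (f : U →ₗ[K] W), (∀ i, y i - δ x i = f (v i)) →
      (∀ i ∈ S, y i = g i) → ∀ i, y i - c (v i) ∈ V x := by
    intro x y f hf hy i
    have h1 := hsub S hS (c - f) (V x) (by
      intro i hi
      have : (c - f) (v i) = δ x i := by
        rw [LinearMap.sub_apply, ← hf i, hc i hi, hy i hi]; abel
      rw [this]; exact hδ x i) i
    have : y i - c (v i) = δ x i - (c - f) (v i) := by
      rw [LinearMap.sub_apply, ← hf i]; abel
    rw [this]
    exact (V x).sub_mem (hδ x i) h1
  have inbox : ∀ x (y : Fin d → W) (f : U →ₗ[K] W), (∀ i, y i - b x i ∈ V x) →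
      (∀ i, y i - δ x i = f (v i)) →
      (∀ i ∈ S, y i = g i) → ∀ i, c (v i) - b x i ∈ V x := by
    intro x y f hy hf hg i
    have := (V x).sub_mem (hy i) (key x y f hf hg i)
    have e : c (v i) - b x i = y i - b x i - (y i - c (v i)) := by abel
    rwa [e]
  have uniq : ∀ f f' : U →ₗ[K] W, (∀ i ∈ S, f (v i) = f' (v i)) → ∀ i, f (v i) = f' (v i) := by
    intro f f' h i
    have := hsub S hS (f - f') ⊥ (by
      intro i hi
      simp [h i hi]) i
    simpa [sub_eq_zero] using this
  by_cases hx : ∃ x, ∀ i, c (v i) - b x i ∈ V x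
  · obtain ⟨x, hx⟩ := hx
    obtain ⟨f, hf⟩ := hext S hS (fun i => g i - δ x i)
    refine ⟨fun i => f (v i) + δ x i, ⟨Or.inl ⟨x, ?_, f, by simp⟩, ?_⟩, ?_⟩
    · intro i
      have := key x (fun i => f (v i) + δ x i) f (by simp) (by
        intro i hi; simp [hf i hi]) i
      have h2 := (V x).add_mem this (hx i)
      simpa using h2
    · intro i hi; simp [hf i hi]
    · rintro y ⟨(⟨x', hy, f', hf'⟩ | ⟨hy, f', hf'⟩), hg⟩
      · obtain rfl := hdisj x' x _ (inbox x' y f' hy hf' hg) hx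
        funext i
        have := uniq f f' (by
          intro i hi
          rw [hf i hi, ← hf' i, hg i hi]) i
        rw [this, ← hf' i]; abel
      · exfalso
        apply hy x
        intro i
        rw [hf' i, uniq f' c (by intro i hi; rw [hc i hi, ← hf' i, hg i hi]) i]
        exact hx i
  · refine ⟨fun i => c (v i), ⟨Or.inr ⟨fun x h => hx ⟨x, h⟩, c, fun _ => rfl⟩, hc⟩, ?_⟩
    rintro y ⟨(⟨x', hy, f', hf'⟩ | ⟨hy, f', hf'⟩), hg⟩
    · exact absurd ⟨x', inbox x' y f' hy hf' hg⟩ hx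
    · funext i
      rw [hf' i, uniq f' c (by intro i hi; rw [hc i hi, ← hf' i, hg i hi]) i]

/-- Vectors in general position. -/
lemma general_position (d k p : ℕ) [Fact p.Prime] (hp : d ≤ p) :
    ∃ v : Fin d → (Fin k → ZMod p), ∀ S : Finset (Fin d), S.card = k →
      LinearIndependent (ZMod p) (fun i : S => v i) := by
  refine ⟨fun i m => ((i : ℕ) : ZMod p) ^ (m : ℕ), ?_⟩
  intro S hS
  let e : Fin k ≃ S := (S.equivFinOfCardEq hS).symm
  rw [← linearIndependent_equiv e]
  have hdet : (Matrix.vandermonde (fun i : Fin k => (((e i : Fin d) : ℕ) : ZMod p))).det ≠ 0 := by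
    rw [Matrix.det_vandermonde_ne_zero_iff]
    intro a b hab
    apply e.injective
    apply Subtype.ext
    apply Fin.ext
    have := (ZMod.natCast_eq_natCast_iff' _ _ _).1 hab
    rwa [Nat.mod_eq_of_lt (lt_of_lt_of_le (e a).1.2 hp),
      Nat.mod_eq_of_lt (lt_of_lt_of_le (e b).1.2 hp)] at this
  exact Matrix.linearIndependent_rows_of_det_ne_zero hdet

lemma core (d t q : ℕ) (ht : t < d)
    (C : Set (Fin d → Fin q))
    (hC : ∀ x ∈ C, ∀ y ∈ C, x ≠ y → t + 1 ≤ hammingDist x y) :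
    ∃ (W : Type) (_ : Fintype W) (ι : Fin d → Fin q → W) (M : Set (Fin d → W)),
      (∀ i, Function.Injective (ι i)) ∧ IsMDS d t M ∧ ∀ x ∈ C, (fun i => ι i (x i)) ∈ M := by
  classical
  obtain ⟨p, hp, hprime⟩ := Nat.exists_infinite_primes d
  have : Fact p.Prime := ⟨hprime⟩
  obtain ⟨v, hv⟩ := general_position d (d - t) p hp
  have hspan : ∀ S : Finset (Fin d), S.card = d - t →
      Submodule.span (ZMod p) (v '' S) = ⊤ := by
    intro S hS
    have := (hv S hS).span_eq_top_of_card_eq_finrank' (by simp [hS])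
    rw [← this]
    congr 1
    ext z; simp
  have hdep : ∀ S : Finset (Fin d), S.card ≤ d - t → ∀ w : Fin d → ZMod p,
      (∑ i, w i • v i = 0) → (∀ i ∉ S, w i = 0) → ∀ i, w i = 0 := by
    intro S hS w hw h0
    obtain ⟨T, hST, hT⟩ := Finset.exists_superset_card_eq hS (by simp)
    have h1 : ∑ i : T, w i • v i = 0 := by
      rw [Finset.sum_coe_sort T (fun i => w i • v i), ← hw]
      apply Finset.sum_subset (Finset.subset_univ _)
      intro i _ hi
      rw [h0 i (fun h => hi (hST h)), zero_smul]
    have h2 := Fintype.linearIndependent_iff.1 (hv T hT) (fun i => w i) h1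
    intro i
    by_cases hi : i ∈ T
    · exact h2 ⟨i, hi⟩
    · exact h0 i (fun h => hi (hST h))
  let W := Fin d × Fin q → ZMod p
  let ι : Fin d → Fin q → W := fun i a => Pi.single (i, a) 1
  let T : (Fin d → ZMod p) →ₗ[ZMod p] (Fin (d - t) → ZMod p) := Fintype.linearCombination _ v
  have hTs : LinearMap.range T = ⊤ := by
    obtain ⟨S, -, hS⟩ := Finset.exists_subset_card_eq (s := (Finset.univ : Finset (Fin d)))
      (n := d - t) (by simp)
    rw [eq_top_iff, ← hspan S hS, Submodule.span_le]
    rintro _ ⟨i, -, rfl⟩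
    exact ⟨Pi.single i 1, by simp [T]⟩
  obtain ⟨R, hR⟩ := T.exists_rightInverse_of_surjective hTs
  let X : C → (Fin d → ZMod p) →ₗ[ZMod p] W :=
    fun x => Fintype.linearCombination _ (fun i => ι i (x.1 i))
  have hXs : ∀ x i, X x (Pi.single i 1) = ι i (x.1 i) := by intro x i; simp [X]
  have hTv : ∀ i, T (Pi.single i 1) = v i := by intro i; simp [T]
  have hXapp : ∀ x w j a, X x w (j, a) = if a = x.1 j then w j else 0 := by
    intro x w j a
    change (∑ i, w i • (Pi.single (i, x.1 i) 1 : Fin d × Fin q → ZMod p)) (j, a) = _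
    simp only [Finset.sum_apply, Pi.smul_apply,
      Pi.single_apply, smul_eq_mul, Prod.mk.injEq]
    rw [Finset.sum_eq_single j]
    · simp
    · intro i _ hi; simp [hi.symm]
    · simp
  obtain ⟨M, hM, hCM⟩ := switching (K := ZMod p) (W := W) (X := C) d t v
    (by
      intro S hS g
      let B := Module.Basis.mk (hv S hS)
        ((hv S hS).span_eq_top_of_card_eq_finrank' (by simp [hS])).ge
      refine ⟨B.constr (ZMod p) (fun i : S => g i), fun i hi => ?_⟩
      have := B.constr_basis (ZMod p) (fun i : S => g i) ⟨i, hi⟩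
      simpa [B] using this)
    (by intro S hS j; rw [hspan S hS]; trivial)
    (fun x => (LinearMap.ker T).map (X x))
    (fun x i => ι i (x.1 i))
    (fun x i => X x (Pi.single i 1 - R (v i)))
    (by
      intro x i
      refine Submodule.mem_map_of_mem ?_
      rw [LinearMap.mem_ker, map_sub, hTv]
      have : T (R (v i)) = v i := LinearMap.congr_fun hR (v i)
      rw [this, sub_self])
    (by
      intro x y z hx hy
      by_contra hne
      have hne' : x.1 ≠ y.1 := fun h => hne (Subtype.ext h)
      obtain ⟨i, hi⟩ := Function.ne_iff.1 hne'
      obtain ⟨w, hw, hwz⟩ := hx i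
      obtain ⟨w', hw', hwz'⟩ := hy i
      have hdiff : ι i (x.1 i) - ι i (y.1 i) = X y w' - X x w := by
        rw [hwz, hwz']; abel
      let S : Finset (Fin d) := insert i (Finset.univ.filter (fun j => x.1 j = y.1 j))
      have hcard : S.card ≤ d - t := by
        have h1 := hC x.1 x.2 y.1 y.2 hne'
        have h2 := Finset.card_filter_add_card_filter_not (s := (Finset.univ : Finset (Fin d)))
          (fun j => x.1 j = y.1 j)
        have h3 := Finset.card_insert_le i (Finset.univ.filter (fun j => x.1 j = y.1 j))
        simp only [hammingDist] at h1
        simp only [Finset.card_univ, Fintype.card_fin] at h2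
        simp only [S]
        simp only [ne_eq] at h1
        omega
      have hcoord : ∀ j, x.1 j ≠ y.1 j → (if j = i then (1 : ZMod p) else 0) = - w j := by
        intro j hj
        have : (Pi.single (i, x.1 i) 1 : Fin d × Fin q → ZMod p) (j, x.1 j)
            - (Pi.single (i, y.1 i) 1 : Fin d × Fin q → ZMod p) (j, x.1 j)
            = X y w' (j, x.1 j) - X x w (j, x.1 j) := congrFun hdiff (j, x.1 j)
        simp only [hXapp, if_neg hj, if_true, Pi.single_apply,
          Prod.mk.injEq] at this
        by_cases hji : j = i
        · subst hji
          simpa [hj] using this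
        · simpa [hji] using this
      have h0 := hdep S hcard w (by
        have := LinearMap.mem_ker.1 hw
        simpa [T, Fintype.linearCombination_apply] using this) (by
        intro j hj
        simp only [S, Finset.mem_insert, Finset.mem_filter, Finset.mem_univ, true_and,
          not_or] at hj
        have := hcoord j hj.2
        rw [if_neg hj.1] at this
        simpa using this.symm) i
      have := hcoord i hi
      simp [h0] at this)
    (by
      intro x
      refine ⟨(X x) ∘ₗ R, ?_⟩
      intro i
      simp only [map_sub, hXs, LinearMap.comp_apply]
      abel)
  refine ⟨W, inferInstance, ι, M, ?_, hM, fun x hx => hCM ⟨x, hx⟩⟩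
  intro i a b hab
  have := congrFun hab (i, a)
  simp only [ι, Pi.single_apply, Prod.mk.injEq] at this
  by_contra h
  simp [h] at this

/-- Any code of length `d` with code distance `t+1` over `Q_q` can be embedded
(via the coordinatewise inclusion `Q_q ⊆ Q_{q'}`) in an MDS code with the same
distance and length over some larger alphabet `Q_{q'}`. -/
theorem embedding_in_MDS (d t q : ℕ) (hd : 1 ≤ d) (ht : t < d) (hq : 1 ≤ q)
    (C : Set (Fin d → Fin q))
    (hC : ∀ x ∈ C, ∀ y ∈ C, x ≠ y → t + 1 ≤ hammingDist x y) :
    ∃ (q' : ℕ) (hqq' : q ≤ q') (M : Set (Fin d → Fin q')),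
      IsMDS d t M ∧
        (fun x : Fin d → Fin q => fun i => Fin.castLE hqq' (x i)) '' C ⊆ M := by
  classical
  obtain ⟨W, _, ι, M, hι, hM, hCM⟩ := core d t q ht C hC
  have hle : q ≤ Fintype.card W := by
    simpa using Fintype.card_le_of_injective _ (hι ⟨0, hd⟩)
  have hex : ∀ i, ∃ e : Fin (Fintype.card W) ≃ W, ∀ a, e (Fin.castLE hle a) = ι i a := by
    intro i
    let f : Fin (Fintype.card W) → W :=
      fun b => if h : (b : ℕ) < q then ι i ⟨b, h⟩ else ι i ⟨0, hq⟩
    obtain ⟨g, hg⟩ := Finset.exists_equiv_extend_of_card_eq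
      (α := Fin (Fintype.card W)) (t := (Finset.univ : Finset W)) (by simp)
      (s := Finset.univ.filter (fun b => (b : ℕ) < q)) (f := f) (by simp) (by
        intro a ha b hb hab
        have ha' : (a : ℕ) < q := by simpa using ha
        have hb' : (b : ℕ) < q := by simpa using hb
        simp only [f, dif_pos ha', dif_pos hb'] at hab
        have := hι i hab
        apply Fin.ext
        simpa using this)
    refine ⟨g.trans (Equiv.subtypeUnivEquiv (by simp)), ?_⟩
    intro a
    have := hg (Fin.castLE hle a) (by simp)
    simpa [f] using this
  choose e he using hex
  refine ⟨Fintype.card W, hle, {y | (fun i => e i (y i)) ∈ M}, ?_, ?_⟩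
  · intro S hS g
    obtain ⟨y, ⟨hy, hyg⟩, hu⟩ := hM S hS (fun i => e i (g i))
    refine ⟨fun i => (e i).symm (y i), ⟨by simpa using hy, ?_⟩, ?_⟩
    · intro i hi
      simp [hyg i hi]
    · rintro z ⟨hz, hzg⟩
      have := hu (fun i => e i (z i)) ⟨hz, fun i hi => by simp [hzg i hi]⟩
      funext i
      simp [← this]
  · rintro _ ⟨x, hx, rfl⟩
    simpa [he] using hCM x hx
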